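/- arXiv:2502.11871 — 2 statements merged into one kernel-verified Lean document; each statement's English description precedes it below -/
import Mathlib

section
/- Let Re(α) > 0, Re(β) > 0, Re(γ) > 0 and a ∈ ℝ. Then the Riemann-Liouville fractional derivative of order α based at 0 satisfies, for t > 0, D^α_{0,t} ( t^{γ−1} E_{β,γ}(a t^β) ) = t^{γ−α−1} E_{β,γ−α}(a t^β). -/
/-- The two-parameter Mittag-Leffler function `E_{α,β}(z) = ∑_{k=0}^∞ z^k / Γ(αk + β)`. -/
noncomputable def mittagLeffler (α β z : ℂ) : ℂ :=
  ∑' k : ℕ, z ^ k / Complex.Gamma (α * k + β)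

/-- The Riemann-Liouville fractional integral of order `α` based at `a`:
`I^α_{a,x} f(x) = (1/Γ(α)) ∫_a^x f(s) (x−s)^{α−1} ds`. -/
noncomputable def rlIntegral (a : ℝ) (α : ℂ) (f : ℝ → ℂ) (x : ℝ) : ℂ :=
  (1 / Complex.Gamma α) * ∫ s in a..x, f s * ((x - s : ℝ) : ℂ) ^ (α - 1)

/-- The Riemann-Liouville fractional derivative of order `α`, with `n = ⌊Re(α)⌋ + 1`:
`D^α_{a,x} y(x) = (d^n/dx^n) I^{n−α}_{a,x} y(x)`. -/
noncomputable def rlDeriv (a : ℝ) (α : ℂ) (f : ℝ → ℂ) (x : ℝ) : ℂ :=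
  iteratedDeriv (⌊α.re⌋ + 1).toNat
    (rlIntegral a ((((⌊α.re⌋ + 1).toNat : ℕ) : ℂ) - α) f) x

/-!
Put `p_μ(t) = t ^ (μ - 1) / Γ(μ)`. The Beta integral gives `I^δ p_μ = p_{μ+δ}`, and the functional
equation of `1 / Γ` gives `p_μ' = p_{μ-1}` for every complex `μ`. Since
`t ^ (γ - 1) E_{β,γ}(a t ^ β) = ∑ a ^ k p_{βk+γ}(t)`, integrating and differentiating termwise
shifts `γ` in the same way: up by `n - α` under `I^{n-α}`, then down by `n` under `(d/dt)^n`.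
Convergence and domination both come from `Γ(u) / Γ(u + β) = B(u, β) / Γ(β) → 0` as `Re u → ∞`.
-/

open Filter MeasureTheory Set
open scoped Interval Topology

/-- The Riemann-Liouville kernel `t ^ (μ - 1) / Γ(μ)`, the fractional counterpart of the monomials
`t ^ n / n!`. At the poles of `Γ` it is `0`, because Mathlib sets `Γ = 0` there and division by zero
gives zero; this agrees with the entire function `1 / Γ`. -/
noncomputable def rlKernel (μ : ℂ) (t : ℝ) : ℂ :=
  (t : ℂ) ^ (μ - 1) / Complex.Gamma μ

/-- The Mittag-Leffler kernel `t ^ (γ - 1) E_{β,γ}(a t ^ β)`, on which fractional integration and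
differentiation act by shifting `γ`. -/
noncomputable def mittagLefflerKernel (β γ a : ℂ) (t : ℝ) : ℂ :=
  (t : ℂ) ^ (γ - 1) * mittagLeffler β γ (a * (t : ℂ) ^ β)

theorem tendsto_betaIntegral_comap_re_atTop {v : ℂ} (hv : 0 < v.re) :
    Tendsto (fun u => Complex.betaIntegral u v) (comap Complex.re atTop) (𝓝 0) := by
  have norm_integrand (u : ℂ) {x : ℝ} (hx : 0 < x) :
      ‖(x : ℂ) ^ (u - 1) * (1 - (x : ℂ)) ^ (v - 1)‖
        = x ^ (u.re - 1) * ‖(1 - (x : ℂ)) ^ (v - 1)‖ := by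
    rw [norm_mul, Complex.norm_cpow_eq_rpow_re_of_pos hx, Complex.sub_re, Complex.one_re]
  have bound_integrable :
      IntervalIntegrable (fun x : ℝ => ‖(1 - (x : ℂ)) ^ (v - 1)‖) volume 0 1 := by
    simpa using (Complex.betaIntegral_convergent (u := 1) (by simp) hv).norm
  suffices Tendsto (fun u => Complex.betaIntegral u v) (comap Complex.re atTop)
      (𝓝 (∫ _ in (0 : ℝ)..1, (0 : ℂ))) by simpa using this
  refine intervalIntegral.tendsto_integral_filter_of_dominated_convergence _
    (Eventually.of_forall fun u => Measurable.aestronglyMeasurable (by fun_prop)) ?_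
    bound_integrable ?_
  · filter_upwards [tendsto_comap.eventually_ge_atTop 1] with u hu
    refine Eventually.of_forall fun x hx => ?_
    rw [uIoc_of_le zero_le_one] at hx
    rw [norm_integrand u hx.1]
    exact mul_le_of_le_one_left (norm_nonneg _)
      (Real.rpow_le_one hx.1.le hx.2 (sub_nonneg.2 hu))
  · filter_upwards [Measure.ae_ne volume (1 : ℝ)] with x hx1 hx
    rw [uIoc_of_le zero_le_one] at hx
    rw [tendsto_zero_iff_norm_tendsto_zero]
    simp_rw [norm_integrand _ hx.1]
    have rpow_tendsto : Tendsto (fun u : ℂ => x ^ (u.re - 1)) (comap Complex.re atTop) (𝓝 0) :=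
      (tendsto_rpow_atTop_of_base_lt_one x (by linarith [hx.1]) (lt_of_le_of_ne hx.2 hx1)).comp
        (tendsto_atTop_add_const_right _ (-1) tendsto_comap)
    simpa using rpow_tendsto.mul_const ‖(1 - (x : ℂ)) ^ (v - 1)‖

theorem tendsto_Gamma_div_Gamma_add_comap_re_atTop {v : ℂ} (hv : 0 < v.re) :
    Tendsto (fun u => Complex.Gamma u / Complex.Gamma (u + v)) (comap Complex.re atTop) (𝓝 0) := by
  have beta_div := (tendsto_betaIntegral_comap_re_atTop hv).div_const (Complex.Gamma v)
  rw [zero_div] at beta_div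
  refine beta_div.congr' ?_
  filter_upwards [tendsto_comap.eventually_gt_atTop 0] with u hu
  have := Complex.Gamma_ne_zero_of_re_pos hv
  rw [Complex.betaIntegral_eq_Gamma_mul_div u v hu hv]
  field_simp

theorem summable_mittagLeffler {β : ℂ} (hβ : 0 < β.re) (γ z : ℂ) :
    Summable fun k : ℕ => z ^ k / Complex.Gamma (β * k + γ) := by
  have re_tendsto : Tendsto (fun k : ℕ => (β * k + γ).re) atTop atTop := by
    simpa using tendsto_atTop_add_const_right _ γ.re
      (tendsto_natCast_atTop_atTop.const_mul_atTop hβ)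
  have ratio_tendsto := (((tendsto_Gamma_div_Gamma_add_comap_re_atTop hβ).comp
    (tendsto_comap_iff.2 re_tendsto)).const_mul z).norm
  rw [mul_zero, norm_zero] at ratio_tendsto
  refine summable_of_ratio_norm_eventually_le (r := 1 / 2) (by norm_num) ?_
  filter_upwards [re_tendsto.eventually_gt_atTop 0,
    ratio_tendsto.eventually_le_const (by norm_num : (0 : ℝ) < 1 / 2)] with k hk ratio_le
  have Gamma_ne_zero := Complex.Gamma_ne_zero_of_re_pos hk
  have term_succ : z ^ (k + 1) / Complex.Gamma (β * (k + 1 : ℕ) + γ)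
      = z * (Complex.Gamma (β * k + γ) / Complex.Gamma (β * k + γ + β))
        * (z ^ k / Complex.Gamma (β * k + γ)) := by
    rw [show β * (k + 1 : ℕ) + γ = β * k + γ + β by push_cast; ring, pow_succ']
    field_simp
  rw [term_succ, norm_mul]
  exact mul_le_mul_of_nonneg_right ratio_le (norm_nonneg _)

theorem measurable_rlKernel (μ : ℂ) : Measurable (rlKernel μ) := by
  unfold rlKernel
  fun_prop

theorem hasDerivAt_rlKernel (μ : ℂ) {t : ℝ} (ht : t ≠ 0) :
    HasDerivAt (rlKernel μ) (rlKernel (μ - 1) t) t := by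
  by_cases hμ : μ - 1 = 0
  · have rlKernel_eq_const : rlKernel μ = fun _ => 1 / Complex.Gamma μ := by
      funext s
      rw [rlKernel, hμ, Complex.cpow_zero]
    have rlKernel_eq_zero : rlKernel (μ - 1) t = 0 := by
      rw [rlKernel, hμ, Complex.Gamma_zero, div_zero]
    rw [rlKernel_eq_const, rlKernel_eq_zero]
    exact hasDerivAt_const t _
  · refine ((hasDerivAt_ofReal_cpow_const ht hμ).div_const (Complex.Gamma μ)).congr_deriv ?_
    have inv_Gamma := Complex.one_div_Gamma_eq_self_mul_one_div_Gamma_add_one (μ - 1)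
    rw [sub_add_cancel] at inv_Gamma
    rw [rlKernel, div_eq_mul_inv, div_eq_mul_inv, inv_Gamma]
    ring

theorem rlIntegral_const_mul (a : ℝ) (δ c : ℂ) (f : ℝ → ℂ) (x : ℝ) :
    rlIntegral a δ (fun s => c * f s) x = c * rlIntegral a δ f x := by
  simp only [rlIntegral, mul_assoc, intervalIntegral.integral_const_mul]
  ring

theorem rlIntegral_rlKernel {μ δ : ℂ} (hμ : 0 < μ.re) (hδ : 0 < δ.re) {t : ℝ} (ht : 0 < t) :
    rlIntegral 0 δ (rlKernel μ) t = rlKernel (μ + δ) t := by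
  have Gamma_μ_ne_zero := Complex.Gamma_ne_zero_of_re_pos hμ
  have Gamma_δ_ne_zero := Complex.Gamma_ne_zero_of_re_pos hδ
  simp only [rlIntegral, rlKernel, div_mul_eq_mul_div, intervalIntegral.integral_div,
    Complex.ofReal_sub]
  rw [Complex.betaIntegral_scaled _ _ ht, Complex.betaIntegral_eq_Gamma_mul_div _ _ hμ hδ]
  field_simp

theorem intervalIntegrable_cpow_mul_sub_cpow {u v : ℂ} (hu : 0 < u.re) (hv : 0 < v.re) {t : ℝ}
    (ht : 0 < t) :
    IntervalIntegrable (fun s : ℝ => (s : ℂ) ^ (u - 1) * ((t - s : ℝ) : ℂ) ^ (v - 1))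
      volume 0 t := by
  -- The Bochner integral of a non-integrable function is `0`, whereas this one is not.
  refine intervalIntegral.intervalIntegrable_of_integral_ne_zero ?_
  have Gamma_add_ne_zero : Complex.Gamma (u + v) ≠ 0 :=
    Complex.Gamma_ne_zero_of_re_pos (by simpa using add_pos hu hv)
  simp only [Complex.ofReal_sub]
  rw [Complex.betaIntegral_scaled _ _ ht, Complex.betaIntegral_eq_Gamma_mul_div _ _ hu hv]
  simp [Complex.cpow_eq_zero_iff, ht.ne', Gamma_add_ne_zero, Complex.Gamma_ne_zero_of_re_pos hu,
    Complex.Gamma_ne_zero_of_re_pos hv]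

theorem hasSum_rlIntegral_of_dominated {ι : Type*} [Countable ι] {F : ι → ℝ → ℂ} {f g : ℝ → ℂ}
    {c : ι → ℝ} {a x : ℝ} {δ : ℂ}
    (hF : ∀ i, AEStronglyMeasurable (F i) (volume.restrict (Ι a x)))
    (hFg : ∀ i, ∀ s ∈ Ι a x, ‖F i s‖ ≤ c i * ‖g s‖) (hc : Summable c)
    (hg : IntervalIntegrable (fun s => g s * ((x - s : ℝ) : ℂ) ^ (δ - 1)) volume a x)
    (hf : ∀ s ∈ Ι a x, HasSum (fun i => F i s) (f s)) :
    HasSum (fun i => rlIntegral a δ (F i) x) (rlIntegral a δ f x) := by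
  refine HasSum.mul_left _ (intervalIntegral.hasSum_integral_of_dominated_convergence
    (fun i s => c i * ‖g s * ((x - s : ℝ) : ℂ) ^ (δ - 1)‖)
    (fun i => (hF i).mul (Measurable.aestronglyMeasurable (by fun_prop)))
    (fun i => Eventually.of_forall fun s hs => ?_)
    (Eventually.of_forall fun s _ => hc.mul_right _) ?_
    (Eventually.of_forall fun s hs => (hf s hs).mul_right _))
  · rw [norm_mul, norm_mul, ← mul_assoc]
    exact mul_le_mul_of_nonneg_right (hFg i s hs) (norm_nonneg _)
  · simp_rw [tsum_mul_right]
    exact hg.norm.const_mul _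

theorem pow_mul_rlKernel (β γ a : ℂ) {t : ℝ} (ht : t ≠ 0) (k : ℕ) :
    a ^ k * rlKernel (β * k + γ) t
      = (t : ℂ) ^ (γ - 1) * ((a * (t : ℂ) ^ β) ^ k / Complex.Gamma (β * k + γ)) := by
  rw [rlKernel, add_sub_assoc, Complex.cpow_add _ _ (Complex.ofReal_ne_zero.2 ht),
    Complex.cpow_mul_nat, mul_pow]
  ring

theorem hasSum_mittagLefflerKernel {β : ℂ} (hβ : 0 < β.re) (γ a : ℂ) {t : ℝ} (ht : t ≠ 0) :
    HasSum (fun k : ℕ => a ^ k * rlKernel (β * k + γ) t) (mittagLefflerKernel β γ a t) := by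
  simp only [pow_mul_rlKernel β γ a ht]
  exact (summable_mittagLeffler hβ γ _).hasSum.mul_left _

theorem norm_pow_mul_rlKernel_le {β : ℂ} (hβ : 0 ≤ β.re) (γ a : ℂ) {s T : ℝ} (hs : 0 < s)
    (hsT : s ≤ T) (k : ℕ) :
    ‖a ^ k * rlKernel (β * k + γ) s‖
      ≤ ‖(a * (T : ℂ) ^ β) ^ k / Complex.Gamma (β * k + γ)‖ * ‖(s : ℂ) ^ (γ - 1)‖ := by
  have norm_cpow_le : ‖(s : ℂ) ^ β‖ ≤ ‖(T : ℂ) ^ β‖ := by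
    rw [Complex.norm_cpow_eq_rpow_re_of_pos hs,
      Complex.norm_cpow_eq_rpow_re_of_pos (hs.trans_le hsT)]
    exact Real.rpow_le_rpow hs.le hsT hβ
  rw [pow_mul_rlKernel β γ a hs.ne', norm_mul, mul_comm]
  simp only [norm_div, norm_pow, norm_mul]
  gcongr

theorem rlIntegral_mittagLefflerKernel {β γ δ : ℂ} (hβ : 0 < β.re) (hγ : 0 < γ.re)
    (hδ : 0 < δ.re) (a : ℂ) {t : ℝ} (ht : 0 < t) :
    rlIntegral 0 δ (mittagLefflerKernel β γ a) t = mittagLefflerKernel β (γ + δ) a t := by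
  have termwise : HasSum (fun k : ℕ => rlIntegral 0 δ (fun s => a ^ k * rlKernel (β * k + γ) s) t)
      (rlIntegral 0 δ (mittagLefflerKernel β γ a) t) := by
    refine hasSum_rlIntegral_of_dominated
      (fun k => ((measurable_rlKernel _).const_mul _).aestronglyMeasurable) (fun k s hs => ?_)
      (summable_mittagLeffler hβ γ (a * (t : ℂ) ^ β)).norm
      (intervalIntegrable_cpow_mul_sub_cpow hγ hδ ht) (fun s hs => ?_)
    all_goals rw [uIoc_of_le ht.le] at hs
    · exact norm_pow_mul_rlKernel_le hβ.le γ a hs.1 hs.2 k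
    · exact hasSum_mittagLefflerKernel hβ γ a hs.1.ne'
  refine termwise.unique ((hasSum_mittagLefflerKernel hβ (γ + δ) a ht.ne').congr_fun fun k => ?_)
  have index_re_pos : 0 < (β * k + γ).re := by
    simpa using add_pos_of_nonneg_of_pos (mul_nonneg hβ.le k.cast_nonneg) hγ
  rw [rlIntegral_const_mul, rlIntegral_rlKernel index_re_pos hδ ht, add_assoc]

theorem hasDerivAt_mittagLefflerKernel {β : ℂ} (hβ : 0 < β.re) (γ a : ℂ) {t : ℝ} (ht : 0 < t) :
    HasDerivAt (mittagLefflerKernel β γ a) (mittagLefflerKernel β (γ - 1) a t) t := by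
  have pos_of_mem {s : ℝ} (hs : s ∈ Ioo (t / 2) (2 * t)) : 0 < s := (half_pos ht).trans hs.1
  have mem : t ∈ Ioo (t / 2) (2 * t) := ⟨half_lt_self ht, by linarith⟩
  obtain ⟨M, hM⟩ : ∃ M, ∀ s ∈ Icc (t / 2) (2 * t), ‖(s : ℂ) ^ (γ - 1 - 1)‖ ≤ M := by
    refine isCompact_Icc.exists_bound_of_continuousOn fun s hs => ContinuousAt.continuousWithinAt ?_
    exact Complex.continuousAt_ofReal_cpow_const s _ (Or.inr ((half_pos ht).trans_le hs.1).ne')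
  have hasDerivAt_series := hasDerivAt_tsum_of_isPreconnected
    (g := fun (k : ℕ) s => a ^ k * rlKernel (β * k + γ) s)
    (g' := fun k s => a ^ k * rlKernel (β * k + (γ - 1)) s)
    ((summable_mittagLeffler hβ (γ - 1) (a * ((2 * t : ℝ) : ℂ) ^ β)).norm.mul_right M)
    isOpen_Ioo isPreconnected_Ioo
    (fun k s hs => by
      simpa only [add_sub_assoc] using
        (hasDerivAt_rlKernel (β * k + γ) (pos_of_mem hs).ne').const_mul (a ^ k))
    (fun k s hs => (norm_pow_mul_rlKernel_le hβ.le (γ - 1) a (pos_of_mem hs) hs.2.le k).trans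
      (mul_le_mul_of_nonneg_left (hM s (Ioo_subset_Icc_self hs)) (norm_nonneg _)))
    mem (hasSum_mittagLefflerKernel hβ γ a ht.ne').summable mem
  rw [(hasSum_mittagLefflerKernel hβ (γ - 1) a ht.ne').tsum_eq] at hasDerivAt_series
  refine hasDerivAt_series.congr_of_eventuallyEq ?_
  filter_upwards [lt_mem_nhds ht] with s hs
  exact (hasSum_mittagLefflerKernel hβ γ a hs.ne').tsum_eq.symm

theorem iteratedDeriv_mittagLefflerKernel {β : ℂ} (hβ : 0 < β.re) (γ a : ℂ) (n : ℕ) :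
    EqOn (iteratedDeriv n (mittagLefflerKernel β γ a)) (mittagLefflerKernel β (γ - n) a)
      (Ioi 0) := by
  induction n with
  | zero => simp [EqOn]
  | succ n ih =>
    intro t ht
    rw [iteratedDeriv_succ, (ih.eventuallyEq_of_mem (Ioi_mem_nhds ht)).deriv_eq,
      (hasDerivAt_mittagLefflerKernel hβ (γ - n) a ht).deriv, Nat.cast_succ, sub_add_eq_sub_sub]

theorem lt_toNat_floor_add_one (r : ℝ) : r < ((⌊r⌋ + 1).toNat : ℝ) :=
  (Int.lt_floor_add_one r).trans_le (mod_cast Int.self_le_toNat (⌊r⌋ + 1))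

-- For `Re α < 0` the truncation `toNat` gives `n = 0`, so that `rlDeriv 0 α` is `I^{-α}`.
theorem rlDeriv_mittagLeffler_general (α : ℂ) {β γ : ℂ} (hβ : 0 < β.re) (hγ : 0 < γ.re) (a : ℂ)
    {t : ℝ} (ht : 0 < t) :
    rlDeriv 0 α (fun s : ℝ => (s : ℂ) ^ (γ - 1) * mittagLeffler β γ (a * (s : ℂ) ^ β)) t
      = (t : ℂ) ^ (γ - α - 1) * mittagLeffler β (γ - α) (a * (t : ℂ) ^ β) := by
  change rlDeriv 0 α (mittagLefflerKernel β γ a) t = mittagLefflerKernel β (γ - α) a t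
  unfold rlDeriv
  set n : ℕ := (⌊α.re⌋ + 1).toNat
  have order_re_pos : 0 < ((n : ℂ) - α).re := by
    simpa using lt_toNat_floor_add_one α.re
  have rlIntegral_eqOn : EqOn (rlIntegral 0 (n - α) (mittagLefflerKernel β γ a))
      (mittagLefflerKernel β (γ + (n - α)) a) (Ioi 0) :=
    fun s hs => rlIntegral_mittagLefflerKernel hβ hγ order_re_pos a hs
  calc iteratedDeriv n (rlIntegral 0 (n - α) (mittagLefflerKernel β γ a)) t
      = iteratedDeriv n (mittagLefflerKernel β (γ + (n - α)) a) t :=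
        rlIntegral_eqOn.iteratedDeriv_of_isOpen isOpen_Ioi n ht
    _ = mittagLefflerKernel β (γ + (n - α) - n) a t :=
        iteratedDeriv_mittagLefflerKernel hβ _ a n ht
    _ = mittagLefflerKernel β (γ - α) a t := by
        rw [show γ + (n - α) - n = γ - α by ring]

/-- For `Re(α) > 0`, `Re(β) > 0`, `Re(γ) > 0`, `a ∈ ℝ` and `t > 0`:
`D^α_{0,t} ( t^{γ−1} E_{β,γ}(a t^β) ) = t^{γ−α−1} E_{β,γ−α}(a t^β)`. -/
theorem rlDeriv_mittagLeffler (α β γ : ℂ) (hα : 0 < α.re) (hβ : 0 < β.re) (hγ : 0 < γ.re)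
    (a : ℝ) (t : ℝ) (ht : 0 < t) :
    rlDeriv 0 α (fun s : ℝ => (s : ℂ) ^ (γ - 1) * mittagLeffler β γ ((a : ℂ) * (s : ℂ) ^ β)) t
      = (t : ℂ) ^ (γ - α - 1) * mittagLeffler β (γ - α) ((a : ℂ) * (t : ℂ) ^ β) :=
  rlDeriv_mittagLeffler_general α hβ hγ a ht
end

section
/- Let 1 < α₁ < 2, 0 < α₂ < α₁, ρ > 0, μ > 0 and T > 0. Then there exists a constant c > 0, depending only on α₁, α₂, ρ, μ and T, such that for every t ∈ (0, T] and every λ > 0, |E_{(α₁−α₂,α₁),ρ}(−μ t^{α₁−α₂}, −λ t^{α₁})| ≤ c / (λ t^{α₁}). -/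
/-- The bivariate Mittag-Leffler function
`E_{(α,β),ρ}(x,y) = ∑_{n=0}^∞ ∑_{k=0}^n (n!/(k!(n−k)!)) x^k y^{n−k} / Γ(ρ + αn + βk)`. -/
noncomputable def mlBi (α β ρ x y : ℝ) : ℝ :=
  ∑' n : ℕ, ∑ k ∈ Finset.range (n + 1),
    (Nat.choose n k : ℝ) * x ^ k * y ^ (n - k) / Real.Gamma (ρ + α * n + β * k)

/-!
In the variable `s = exp ζ`, Hankel's formula expresses every `1 / Γ` in the series as the integral
of an entire function of `ζ` over the boundary of a half-strip `re ζ > X`, `|im ζ| < θ`, where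
`π / 2 < θ`. For `X` large the resulting series of integrands is a convergent geometric series,
whose sum has denominator `s ^ α - y - x * s ^ (-β)`. Since `α < 2`, we may choose `θ` with
`α * θ < π`; then `s ^ α` stays away from the negative axis on the whole half-strip. Hence for
`y = -L`, with `L` large compared with `x`, the denominator is at least a constant times `L` even
for `X = 0`, and moving the contour there gives the bound `O(1 / L)`. For bounded `L` it is enough
that the function is bounded on bounded sets.
-/

section

open Set Filter Topology MeasureTheory
open Complex (I)
open scoped Real Complex

lemma integral_exp_smul_comp_exp {E : Type*} [NormedAddCommGroup E] [NormedSpace ℝ E]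
    (g : ℝ → E) : ∫ x, rexp x • g (rexp x) = ∫ y in Ioi 0, g y := by
  have h := integral_image_eq_integral_abs_deriv_smul MeasurableSet.univ
    (fun x _ => (Real.hasDerivAt_exp x).hasDerivWithinAt) Real.exp_injective.injOn g
  simpa only [image_univ, Real.range_exp, Real.abs_exp, setIntegral_univ] using h.symm

lemma integral_cexp_neg_cexp_add {a : ℂ} (ha : 0 < a.re) :
    ∫ x : ℝ, cexp (-cexp x + a * x) = Complex.Gamma a := by
  rw [Complex.Gamma_eq_integral ha, Complex.GammaIntegral, ← integral_exp_smul_comp_exp]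
  congr 1 with x
  rw [Complex.cpow_def_of_ne_zero (by simp), ← Complex.ofReal_log (Real.exp_pos x).le,
    Real.log_exp, Complex.real_smul]
  push_cast
  rw [← Complex.exp_add, ← Complex.exp_add]
  ring_nf

lemma integrable_exp_mul_exp_add {b c : ℝ} (hb : 0 < b) (hc : c < 0) :
    Integrable fun x => rexp (c * rexp x + b * x) := by
  have h : ∫ x, rexp (c * rexp x + b * x) = (1 / -c) ^ b * Real.Gamma b := by
    rw [← Real.integral_rpow_mul_exp_neg_mul_Ioi hb (neg_pos.mpr hc),
      ← integral_exp_smul_comp_exp]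
    congr 1 with x
    rw [Real.rpow_def_of_pos (Real.exp_pos x), Real.log_exp, smul_eq_mul, ← Real.exp_add,
      ← Real.exp_add]
    ring_nf
  -- Nonintegrable functions have integral `0`, so a nonzero value proves integrability.
  refine .of_integral_ne_zero ?_
  rw [h]
  have : 0 < 1 / -c := one_div_pos.mpr (neg_pos.mpr hc)
  exact (mul_pos (Real.rpow_pos_of_pos this b) (Real.Gamma_pos_of_pos hb)).ne'

lemma integrable_exp_mul_exp_add_mul_exp_add {b c : ℝ} (hb : 0 < b) (hc : c < 0) (d : ℝ) :
    Integrable fun x => rexp (c * rexp x + b * x) * (rexp x + d) := by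
  refine ((integrable_exp_mul_exp_add (add_pos hb one_pos) hc).add
    ((integrable_exp_mul_exp_add hb hc).mul_const d)).congr (ae_of_all _ fun x => ?_)
  simp only [Pi.add_apply, mul_add (rexp _), ← Real.exp_add]
  ring_nf

lemma integral_add_mul_I_eq_of_norm_le {f : ℂ → ℂ} (hf : Differentiable ℂ f) {s : Set ℝ}
    (hs : IsOpen s) (hs' : IsPreconnected s) {bound : ℝ → ℝ} (hbound : Integrable bound)
    (hf_le : ∀ x : ℝ, ∀ v ∈ s, ‖f (x + v * I)‖ ≤ bound x)
    (hf'_le : ∀ x : ℝ, ∀ v ∈ s, ‖deriv f (x + v * I)‖ ≤ bound x) {u v : ℝ} (hu : u ∈ s)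
    (hv : v ∈ s) : ∫ x : ℝ, f (x + u * I) = ∫ x : ℝ, f (x + v * I) := by
  have hf_cont := hf.continuous
  have hf'_cont := (hf.contDiff (n := 1)).continuous_deriv le_rfl
  have hint (w : ℝ) (hw : w ∈ s) : Integrable fun x : ℝ => f (x + w * I) :=
    hbound.mono' (Continuous.aestronglyMeasurable (by fun_prop)) (ae_of_all _ (hf_le · w hw))
  have hint' (w : ℝ) (hw : w ∈ s) : Integrable fun x : ℝ => deriv f (x + w * I) :=
    hbound.mono' (Continuous.aestronglyMeasurable (by fun_prop)) (ae_of_all _ (hf'_le · w hw))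
  have hderiv_re (w x : ℝ) : HasDerivAt (fun x : ℝ => f (x + w * I)) (deriv f (x + w * I)) x :=
    ((hf _).hasDerivAt.comp_add_const (x : ℂ) (w * I)).comp_ofReal
  have hderiv_im (x w : ℝ) :
      HasDerivAt (fun w : ℝ => f (x + w * I)) (deriv f (x + w * I) * I) w := by
    simpa using ((hf _).hasDerivAt.comp (w : ℂ)
      (((hasDerivAt_id _).mul_const I).const_add (x : ℂ))).comp_ofReal
  have hderiv (w : ℝ) (hw : w ∈ s) : HasDerivAt (fun w : ℝ => ∫ x : ℝ, f (x + w * I)) 0 w := by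
    have h := (hasDerivAt_integral_of_dominated_loc_of_deriv_le (hs.mem_nhds hw)
      (.of_forall fun w => Continuous.aestronglyMeasurable (by fun_prop)) (hint w hw)
      ((hint' w hw).mul_const I).1
      (ae_of_all _ fun x w hw => by simpa using hf'_le x w hw) hbound
      (ae_of_all _ fun x w _ => hderiv_im x w)).2
    rwa [integral_mul_const, integral_eq_zero_of_hasDerivAt_of_integrable (hderiv_re w)
      (hint' w hw) (hint w hw), zero_mul] at h
  exact hs.is_const_of_deriv_eq_zero hs'
    (fun w hw => (hderiv w hw).differentiableAt.differentiableWithinAt)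
    (fun w hw => (hderiv w hw).deriv) hu hv

lemma norm_cexp_neg_cexp_add_le {ψ v : ℝ} (hv : |v| ≤ ψ) (hψ : ψ ≤ π) (a : ℂ) (x : ℝ) :
    ‖cexp (-cexp (x + v * I) + a * (x + v * I))‖ ≤
      rexp (|a.im| * ψ) * rexp (-Real.cos ψ * rexp x + a.re * x) := by
  have hcos : Real.cos ψ ≤ Real.cos v := by
    rw [← Real.cos_abs v]
    exact Real.cos_le_cos_of_nonneg_of_le_pi (abs_nonneg v) hψ hv
  have him : -(a.im * v) ≤ |a.im| * ψ := by
    refine (neg_le_abs _).trans ?_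
    rw [abs_mul]
    gcongr
  have hre : (-cexp (x + v * I) + a * (x + v * I)).re =
      -(rexp x * Real.cos v) + (a.re * x - a.im * v) := by
    simp [Complex.exp_re]
  rw [Complex.norm_exp, hre, ← Real.exp_add, Real.exp_le_exp]
  linarith [mul_le_mul_of_nonneg_left hcos (Real.exp_pos x).le]

lemma integral_cexp_neg_cexp_add_add_mul_I {a : ℂ} (ha : 0 < a.re) {φ : ℝ} (hφ : |φ| < π / 2) :
    ∫ x : ℝ, cexp (-cexp (x + φ * I) + a * (x + φ * I)) = Complex.Gamma a := by
  obtain ⟨ψ, hφψ, hψ⟩ := exists_between hφ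
  have hψ₀ : 0 < ψ := (abs_nonneg φ).trans_lt hφψ
  have hcos : 0 < Real.cos ψ := Real.cos_pos_of_mem_Ioo ⟨by linarith, hψ⟩
  set f : ℂ → ℂ := fun ζ => cexp (-cexp ζ + a * ζ)
  set E : ℝ → ℝ := fun x => rexp (|a.im| * ψ) * rexp (-Real.cos ψ * rexp x + a.re * x)
  have hf_le (x v : ℝ) (hv : v ∈ Ioo (-ψ) ψ) : ‖f (x + v * I)‖ ≤ E x :=
    norm_cexp_neg_cexp_add_le (abs_lt.mpr hv).le (by linarith) a x
  have hderiv (ζ : ℂ) : deriv f ζ = f ζ * (-cexp ζ + a) := by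
    simpa using ((Complex.hasDerivAt_exp ζ).neg.add ((hasDerivAt_id ζ).const_mul a)).cexp.deriv
  have hfactor (x v : ℝ) : ‖-cexp (x + v * I) + a‖ ≤ rexp x + ‖a‖ := by
    simpa [Complex.norm_exp] using norm_add_le (-cexp (x + v * I)) a
  have hf'_le (x v : ℝ) (hv : v ∈ Ioo (-ψ) ψ) :
      ‖deriv f (x + v * I)‖ ≤ E x * (rexp x + ‖a‖) := by
    rw [hderiv, norm_mul]
    exact mul_le_mul (hf_le x v hv) (hfactor x v) (norm_nonneg _) (by positivity)
  have hbound : Integrable fun x => E x * (rexp x + (‖a‖ + 1)) := by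
    simp only [E, mul_assoc (rexp _) (rexp _)]
    exact (integrable_exp_mul_exp_add_mul_exp_add ha (neg_neg_of_pos hcos) _).const_mul _
  have hshift := integral_add_mul_I_eq_of_norm_le (f := f) (by fun_prop) isOpen_Ioo
    isPreconnected_Ioo hbound
    (fun x v hv => (hf_le x v hv).trans <| le_mul_of_one_le_right (by positivity) <|
      by linarith [Real.exp_pos x, norm_nonneg a])
    (fun x v hv => (hf'_le x v hv).trans <| mul_le_mul_of_nonneg_left
      (by linarith) (by positivity))
    (abs_lt.mp hφψ) (show (0 : ℝ) ∈ Ioo (-ψ) ψ from ⟨neg_lt_zero.mpr hψ₀, hψ₀⟩)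
  simpa only [f, Complex.ofReal_zero, zero_mul, add_zero, integral_cexp_neg_cexp_add ha]
    using hshift

/-- The integrand of Hankel's formula `1 / Γ(1 - a) = (2πi)⁻¹ ∫ e ^ s * s ^ (a - 1) ds` after the
substitution `s = exp ζ`, which makes it entire in `ζ`. -/
noncomputable def hankelKernel (a ζ : ℂ) : ℂ :=
  cexp (cexp ζ + a * ζ)

lemma differentiable_hankelKernel (a : ℂ) : Differentiable ℂ (hankelKernel a) := by
  unfold hankelKernel
  fun_prop

lemma continuous_hankelKernel (a : ℂ) : Continuous (hankelKernel a) :=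
  (differentiable_hankelKernel a).continuous

lemma hankelKernel_add (a b ζ : ℂ) : hankelKernel (a + b) ζ = hankelKernel a ζ * cexp (b * ζ) := by
  rw [hankelKernel, hankelKernel, ← Complex.exp_add]
  ring_nf

lemma norm_hankelKernel_le (a ζ : ℂ) :
    ‖hankelKernel a ζ‖ ≤ rexp (‖a‖ * ‖ζ‖ + (cexp ζ).re) := by
  rw [hankelKernel, Complex.norm_exp, Complex.add_re, add_comm]
  gcongr
  exact (Complex.re_le_norm _).trans (norm_mul_le _ _)

lemma integral_hankelKernel_add_mul_I {a : ℂ} (ha : 0 < a.re) {σ φ : ℝ} (hσ : cexp (σ * I) = -1)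
    (hφ : |φ| < π / 2) :
    ∫ x : ℝ, hankelKernel a (x + (σ + φ : ℝ) * I) = cexp (a * (σ * I)) * Complex.Gamma a := by
  rw [← integral_cexp_neg_cexp_add_add_mul_I ha hφ, ← integral_const_mul]
  congr 1 with x
  have h : cexp (x + (σ + φ : ℝ) * I) = -cexp (x + φ * I) := by
    rw [← neg_one_mul (cexp _), ← hσ, ← Complex.exp_add]
    push_cast
    ring_nf
  rw [hankelKernel, h, ← Complex.exp_add]
  push_cast
  ring_nf

lemma integrable_hankelKernel_add_mul_I {a : ℂ} (ha : 0 < a.re) {σ φ : ℝ}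
    (hσ : cexp (σ * I) = -1) (hφ : |φ| < π / 2) :
    Integrable fun x : ℝ => hankelKernel a (x + (σ + φ : ℝ) * I) := by
  refine .of_integral_ne_zero ?_
  rw [integral_hankelKernel_add_mul_I ha hσ hφ]
  exact mul_ne_zero (Complex.exp_ne_zero _) (Complex.Gamma_ne_zero_of_re_pos ha)

lemma measurableEmbedding_ofReal_add_mul_I (v : ℝ) :
    MeasurableEmbedding fun x : ℝ => (x : ℂ) + v * I :=
  (Isometry.of_dist_eq fun x y => by
    rw [Complex.dist_of_im_eq (by simp)]; simp).isClosedEmbedding.measurableEmbedding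

lemma measurableEmbedding_add_ofReal_mul_I (x : ℝ) :
    MeasurableEmbedding fun v : ℝ => (x : ℂ) + v * I :=
  (Isometry.of_dist_eq fun u v => by
    rw [Complex.dist_of_re_eq (by simp)]; simp).isClosedEmbedding.measurableEmbedding

/-- Arc length on the boundary of the half-strip `re > X`, `|im| < θ`: the image under `log` of a
Hankel contour made of two rays at angle `θ` and an arc of radius `exp X`. -/
noncomputable def hankelMeasure (θ X : ℝ) : Measure ℂ :=
  (volume.restrict (Ioi X)).map (fun x : ℝ => x + θ * I) +
    (volume.restrict (Ioi X)).map (fun x : ℝ => x + (-θ : ℝ) * I) +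
    (volume.restrict (Ioo (-θ) θ)).map (fun v : ℝ => X + v * I)

/-- The unit tangent of the contour of `hankelMeasure θ X` when it is traversed as a Hankel contour,
coming in from infinity along the lower ray and leaving along the upper one. -/
noncomputable def hankelTangent (θ : ℝ) (ζ : ℂ) : ℂ :=
  if θ ≤ ζ.im then 1 else if ζ.im ≤ -θ then -1 else I

/-- The contour integral of `f` along the logarithm of a Hankel contour. -/
noncomputable def hankelIntegral (θ X : ℝ) (f : ℂ → ℂ) : ℂ :=
  ∫ ζ, hankelTangent θ ζ * f ζ ∂hankelMeasure θ X

/-- The half-strip bounded by the contour of `hankelMeasure θ X`. -/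
def hankelStrip (θ X : ℝ) : Set ℂ :=
  Ici X ×ℂ Icc (-θ) θ

lemma add_mul_I_mem_hankelStrip {θ X x v : ℝ} :
    (x : ℂ) + v * I ∈ hankelStrip θ X ↔ X ≤ x ∧ -θ ≤ v ∧ v ≤ θ := by
  simp [hankelStrip, Complex.mem_reProdIm]

lemma measurableSet_hankelStrip (θ X : ℝ) : MeasurableSet (hankelStrip θ X) :=
  ((isClosed_Ici (a := X)).reProdIm (isClosed_Icc (a := -θ) (b := θ))).measurableSet

lemma ae_hankelMeasure_mem_hankelStrip {θ : ℝ} (hθ : 0 ≤ θ) (X : ℝ) :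
    ∀ᵐ ζ ∂hankelMeasure θ X, ζ ∈ hankelStrip θ X := by
  have hθ' : -θ ≤ θ := neg_le_self hθ
  simp only [hankelMeasure, ae_add_measure_iff,
    (measurableEmbedding_ofReal_add_mul_I _).ae_map_iff,
    (measurableEmbedding_add_ofReal_mul_I _).ae_map_iff, add_mul_I_mem_hankelStrip]
  refine ⟨⟨?_, ?_⟩, ?_⟩
  · filter_upwards [ae_restrict_mem measurableSet_Ioi] with x hx using ⟨hx.le, hθ', le_rfl⟩
  · filter_upwards [ae_restrict_mem measurableSet_Ioi] with x hx using ⟨hx.le, le_rfl, hθ'⟩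
  · filter_upwards [ae_restrict_mem measurableSet_Ioo] with v hv using ⟨le_rfl, hv.1.le, hv.2.le⟩

lemma integrable_hankelMeasure_iff {θ X : ℝ} {E : Type*} [NormedAddCommGroup E] {f : ℂ → E} :
    Integrable f (hankelMeasure θ X) ↔
      IntegrableOn (fun x : ℝ => f (x + θ * I)) (Ioi X) ∧
      IntegrableOn (fun x : ℝ => f (x + (-θ : ℝ) * I)) (Ioi X) ∧
      IntegrableOn (fun v : ℝ => f (X + v * I)) (Ioo (-θ) θ) := by
  rw [hankelMeasure, integrable_add_measure, integrable_add_measure,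
    (measurableEmbedding_ofReal_add_mul_I _).integrable_map_iff,
    (measurableEmbedding_ofReal_add_mul_I _).integrable_map_iff,
    (measurableEmbedding_add_ofReal_mul_I _).integrable_map_iff, and_assoc]
  rfl

lemma measurable_hankelTangent (θ : ℝ) : Measurable (hankelTangent θ) :=
  .ite (measurableSet_le measurable_const Complex.measurable_im) measurable_const <|
    .ite (measurableSet_le Complex.measurable_im measurable_const) measurable_const measurable_const

lemma norm_hankelTangent (θ : ℝ) (ζ : ℂ) : ‖hankelTangent θ ζ‖ = 1 := by
  unfold hankelTangent
  split_ifs <;> simp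

lemma integrable_hankelTangent_mul {θ X : ℝ} {f : ℂ → ℂ}
    (hf : Integrable f (hankelMeasure θ X)) :
    Integrable (fun ζ => hankelTangent θ ζ * f ζ) (hankelMeasure θ X) :=
  hf.bdd_mul (measurable_hankelTangent θ).aestronglyMeasurable
    (ae_of_all _ fun ζ => (norm_hankelTangent θ ζ).le)

lemma hankelIntegral_eq {θ X : ℝ} (hθ : 0 < θ) {f : ℂ → ℂ}
    (hf : Integrable f (hankelMeasure θ X)) :
    hankelIntegral θ X f = (∫ x : ℝ in Ioi X, f (x + θ * I)) -
      (∫ x : ℝ in Ioi X, f (x + (-θ : ℝ) * I)) + I * ∫ v in (-θ)..θ, f (X + v * I) := by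
  have hint := integrable_hankelTangent_mul hf
  rw [hankelMeasure, integrable_add_measure, integrable_add_measure] at hint
  obtain ⟨⟨hupper, hlower⟩, harc⟩ := hint
  rw [hankelIntegral, hankelMeasure, integral_add_measure (hupper.add_measure hlower) harc,
    integral_add_measure hupper hlower,
    (measurableEmbedding_ofReal_add_mul_I _).integral_map,
    (measurableEmbedding_ofReal_add_mul_I _).integral_map,
    (measurableEmbedding_add_ofReal_mul_I _).integral_map,
    intervalIntegral.integral_of_le (by linarith), integral_Ioc_eq_integral_Ioo, sub_eq_add_neg,
    ← integral_neg, ← integral_const_mul]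
  refine congrArg₂ _ (congrArg₂ _ ?_ ?_) ?_
  · simp [hankelTangent]
  · have : ¬ θ ≤ -θ := by linarith
    simp [hankelTangent, this]
  · refine setIntegral_congr_fun measurableSet_Ioo fun v hv => ?_
    simp [hankelTangent, hv.1.not_ge, hv.2.not_ge]

lemma norm_hankelIntegral_le {θ X C : ℝ} (hθ : 0 ≤ θ) {f g : ℂ → ℂ}
    (hg : Integrable g (hankelMeasure θ X)) (hfg : ∀ ζ ∈ hankelStrip θ X, ‖f ζ‖ ≤ C * ‖g ζ‖) :
    ‖hankelIntegral θ X f‖ ≤ C * ∫ ζ, ‖g ζ‖ ∂hankelMeasure θ X := by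
  rw [← integral_const_mul]
  refine norm_integral_le_of_norm_le (hg.norm.const_mul C) ?_
  filter_upwards [ae_hankelMeasure_mem_hankelStrip hθ X] with ζ hζ
  rw [norm_mul, norm_hankelTangent, one_mul]
  exact hfg ζ hζ

lemma integrable_hankelMeasure_of_norm_le {θ X : ℝ} (hθ : 0 ≤ θ) {f g : ℂ → ℂ}
    {C : ℝ} (hg : Integrable g (hankelMeasure θ X)) (hf : ContinuousOn f (hankelStrip θ X))
    (hfg : ∀ ζ ∈ hankelStrip θ X, ‖f ζ‖ ≤ C * ‖g ζ‖) : Integrable f (hankelMeasure θ X) := by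
  have hmem := ae_hankelMeasure_mem_hankelStrip hθ X
  refine (hg.norm.const_mul C).mono' ?_ (hmem.mono hfg)
  rw [← Measure.restrict_eq_self_of_ae_mem hmem]
  exact hf.aestronglyMeasurable (measurableSet_hankelStrip θ X)

lemma hankelIntegral_sum {ι : Type*} {θ X : ℝ} (s : Finset ι) (c : ι → ℂ) {f : ι → ℂ → ℂ}
    (hf : ∀ i ∈ s, Integrable (f i) (hankelMeasure θ X)) :
    hankelIntegral θ X (fun ζ => ∑ i ∈ s, c i * f i ζ) =
      ∑ i ∈ s, c i * hankelIntegral θ X (f i) := by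
  simp only [hankelIntegral, Finset.mul_sum, mul_left_comm _ (c _)]
  rw [integral_finsetSum _ fun i hi => (integrable_hankelTangent_mul (hf i hi)).const_mul (c i)]
  simp only [integral_const_mul]

lemma hankelIntegral_eq_of_le {θ X Y : ℝ} (hθ : 0 < θ) (hXY : X ≤ Y) {f : ℂ → ℂ}
    (hf : DifferentiableOn ℂ f (hankelStrip θ X)) (hX : Integrable f (hankelMeasure θ X))
    (hY : Integrable f (hankelMeasure θ Y)) : hankelIntegral θ X f = hankelIntegral θ Y f := by
  have hray {v : ℝ} (hv : IntegrableOn (fun x : ℝ => f (x + v * I)) (Ioi X)) :=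
    intervalIntegral.integral_interval_add_Ioi' (a := X) (b := Y)
      ((intervalIntegrable_iff_integrableOn_Ioc_of_le hXY).mpr
        (hv.mono_set Ioc_subset_Ioi_self)) (hv.mono_set (Ioi_subset_Ioi hXY))
  have hrect := Complex.integral_boundary_rect_eq_zero_of_differentiableOn f ⟨X, -θ⟩ ⟨Y, θ⟩
    (hf.mono ?_)
  · obtain ⟨hupper, hlower, -⟩ := integrable_hankelMeasure_iff.mp hX
    rw [hankelIntegral_eq hθ hX, hankelIntegral_eq hθ hY, ← hray hupper, ← hray hlower]
    simp only [smul_eq_mul] at hrect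
    linear_combination -hrect
  · rw [uIcc_of_le hXY, uIcc_of_le (by linarith)]
    exact fun ζ hζ => ⟨hζ.1.1, hζ.2⟩

lemma integrable_exp_mul_norm_add_re_cexp {θ : ℝ} (hθ : Real.cos θ < 0) (X B : ℝ) :
    Integrable (fun ζ : ℂ => rexp (B * ‖ζ‖ + (cexp ζ).re)) (hankelMeasure θ X) := by
  have hray {v : ℝ} (hv : Real.cos v < 0) :
      IntegrableOn (fun x : ℝ => rexp (B * ‖x + v * I‖ + (cexp (x + v * I)).re)) (Ioi X) := by
    set D := |B| * (2 * |X| + |v|)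
    refine ((integrable_exp_mul_exp_add (b := |B| + 1) (by positivity) hv).const_mul
      (rexp (D + |X|))).integrableOn.mono' (by fun_prop) ?_
    filter_upwards [ae_restrict_mem measurableSet_Ioi] with x hx
    have hxX : |x| ≤ x + 2 * |X| := abs_le'.mpr
      ⟨by linarith [abs_nonneg X], by linarith [neg_abs_le X, mem_Ioi.mp hx]⟩
    have hnorm : ‖(x : ℂ) + v * I‖ ≤ x + 2 * |X| + |v| :=
      (norm_add_le _ _).trans (by simpa using hxX)
    have hB : B * ‖(x : ℂ) + v * I‖ ≤ |B| * (x + 2 * |X| + |v|) := by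
      gcongr
      exact le_abs_self B
    have hre : (cexp (x + v * I)).re = Real.cos v * rexp x := by simp [Complex.exp_re, mul_comm]
    rw [Real.norm_eq_abs, Real.abs_exp, hre, ← Real.exp_add, Real.exp_le_exp]
    linarith [neg_abs_le X, mem_Ioi.mp hx]
  refine integrable_hankelMeasure_iff.mpr ⟨hray hθ, hray (by simpa), ?_⟩
  exact (Continuous.integrableOn_Icc (by fun_prop)).mono_set Ioo_subset_Icc_self

lemma integrable_hankelKernel {θ : ℝ} (hθ : Real.cos θ < 0) (X : ℝ) (a : ℂ) :
    Integrable (hankelKernel a) (hankelMeasure θ X) :=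
  (integrable_exp_mul_norm_add_re_cexp hθ X ‖a‖).mono'
    (continuous_hankelKernel a).aestronglyMeasurable (ae_of_all _ (norm_hankelKernel_le a))

lemma differentiable_hankelIntegral_hankelKernel {θ : ℝ} (hθ : Real.cos θ < 0) (X : ℝ) :
    Differentiable ℂ fun a => hankelIntegral θ X (hankelKernel a) := by
  intro a₀
  have hmeas {f : ℂ → ℂ} (hf : Continuous f) :
      AEStronglyMeasurable (fun ζ => hankelTangent θ ζ * f ζ) (hankelMeasure θ X) :=
    (measurable_hankelTangent θ).aestronglyMeasurable.mul hf.aestronglyMeasurable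
  have hderiv (a ζ : ℂ) :
      HasDerivAt (fun a => hankelKernel a ζ) (ζ * hankelKernel a ζ) a := by
    simpa [hankelKernel, mul_comm] using
      (((hasDerivAt_id a).mul_const ζ).const_add (cexp ζ)).cexp
  have hbound {a : ℂ} (ha : a ∈ Metric.ball a₀ 1) (ζ : ℂ) :
      ‖hankelTangent θ ζ * (ζ * hankelKernel a ζ)‖ ≤
        rexp ((‖a₀‖ + 2) * ‖ζ‖ + (cexp ζ).re) := by
    have ha' : ‖a‖ ≤ ‖a₀‖ + 1 := by
      linarith [norm_le_norm_add_norm_sub' a a₀, mem_ball_iff_norm.mp ha]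
    calc ‖hankelTangent θ ζ * (ζ * hankelKernel a ζ)‖
        ≤ rexp ‖ζ‖ * rexp (‖a‖ * ‖ζ‖ + (cexp ζ).re) := by
          rw [norm_mul, norm_hankelTangent, one_mul, norm_mul]
          gcongr
          · linarith [Real.add_one_le_exp ‖ζ‖]
          · exact norm_hankelKernel_le a ζ
      _ ≤ rexp ((‖a₀‖ + 2) * ‖ζ‖ + (cexp ζ).re) := by
          rw [← Real.exp_add, Real.exp_le_exp]
          linarith [mul_le_mul_of_nonneg_right ha' (norm_nonneg ζ)]
  exact (hasDerivAt_integral_of_dominated_loc_of_deriv_le (Metric.ball_mem_nhds a₀ one_pos)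
    (.of_forall fun a => hmeas (continuous_hankelKernel a))
    (integrable_hankelTangent_mul (integrable_hankelKernel hθ X a₀))
    (hmeas (continuous_id.mul (continuous_hankelKernel a₀)))
    (ae_of_all _ fun ζ a ha => hbound ha ζ) (integrable_exp_mul_norm_add_re_cexp hθ X _)
    (ae_of_all _ fun ζ a _ => (hderiv a ζ).const_mul _)).2.differentiableAt

lemma hankelIntegral_hankelKernel_eq_hankelIntegral {θ : ℝ} (h₀ : 0 < θ) (hθ : Real.cos θ < 0)
    (X Y : ℝ) (a : ℂ) :
    hankelIntegral θ X (hankelKernel a) = hankelIntegral θ Y (hankelKernel a) := by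
  wlog hXY : X ≤ Y generalizing X Y
  · exact (this Y X (le_of_not_ge hXY)).symm
  exact hankelIntegral_eq_of_le h₀ hXY (differentiable_hankelKernel a).differentiableOn
    (integrable_hankelKernel hθ X a) (integrable_hankelKernel hθ Y a)

lemma tendsto_integral_hankelKernel_atBot {a : ℂ} (ha : 0 < a.re) {θ : ℝ} (hθ : 0 ≤ θ) :
    Tendsto (fun X : ℝ => ∫ v in (-θ)..θ, hankelKernel a (X + v * I)) atBot (𝓝 0) := by
  have hlim : Tendsto (fun X : ℝ => rexp (rexp X + |a.im| * θ + a.re * X) * |θ - -θ|) atBot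
      (𝓝 0) := by
    have h := (Real.tendsto_exp_atBot.add_const (|a.im| * θ)).add_atBot
      (tendsto_id.const_mul_atBot ha)
    simpa using (Real.tendsto_exp_atBot.comp h).mul_const |θ - -θ|
  refine squeeze_zero_norm (fun X => intervalIntegral.norm_integral_le_of_norm_le_const
    fun v hv => ?_) hlim
  rw [uIoc_of_le (neg_le_self hθ)] at hv
  have hv' : |v| ≤ θ := abs_le.mpr ⟨hv.1.le, hv.2⟩
  have hre : (cexp (X + v * I) + a * (X + v * I)).re =
      rexp X * Real.cos v + (a.re * X - a.im * v) := by
    simp [Complex.exp_re]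
  have hcos : rexp X * Real.cos v ≤ rexp X :=
    mul_le_of_le_one_right (Real.exp_pos X).le (Real.cos_le_one v)
  have him : -(a.im * v) ≤ |a.im| * θ := by
    refine (neg_le_abs _).trans ?_
    rw [abs_mul]
    gcongr
  rw [hankelKernel, Complex.norm_exp, hre, Real.exp_le_exp]
  linarith

/- As `X → -∞` the arc contributes nothing, and the two rays become Gamma integrals along
rotated half-lines. -/
lemma hankelIntegral_hankelKernel_of_re_pos {θ : ℝ} (h₁ : π / 2 < θ) (h₂ : θ < π + π / 2) (X : ℝ)
    {a : ℂ} (ha : 0 < a.re) :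
    hankelIntegral θ X (hankelKernel a) = 2 * I * Complex.sin (π * a) * Complex.Gamma a := by
  have hθ₀ : 0 < θ := by linarith [Real.pi_pos]
  have hcos : Real.cos θ < 0 := Real.cos_neg_of_pi_div_two_lt_of_lt h₁ h₂
  have hupper : Tendsto (fun Y : ℝ => ∫ x in Ioi Y, hankelKernel a (x + θ * I)) atBot
      (𝓝 (cexp (a * (π * I)) * Complex.Gamma a)) := by
    have hφ : |θ - π| < π / 2 := abs_lt.mpr ⟨by linarith, by linarith⟩
    have h := (aecover_Ioi tendsto_id).integral_tendsto_of_countably_generated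
      (integrable_hankelKernel_add_mul_I ha Complex.exp_pi_mul_I hφ)
    rwa [integral_hankelKernel_add_mul_I ha Complex.exp_pi_mul_I hφ, add_sub_cancel] at h
  have hlower : Tendsto (fun Y : ℝ => ∫ x in Ioi Y, hankelKernel a (x + (-θ : ℝ) * I)) atBot
      (𝓝 (cexp (a * ((-π : ℝ) * I)) * Complex.Gamma a)) := by
    have hπ : cexp ((-π : ℝ) * I) = -1 := by simp [Complex.exp_neg]
    have hφ : |π - θ| < π / 2 := abs_lt.mpr ⟨by linarith, by linarith⟩
    have h := (aecover_Ioi tendsto_id).integral_tendsto_of_countably_generated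
      (integrable_hankelKernel_add_mul_I ha hπ hφ)
    rwa [integral_hankelKernel_add_mul_I ha hπ hφ, show -π + (π - θ) = -θ by ring] at h
  have hlim := (hupper.sub hlower).add
    ((tendsto_integral_hankelKernel_atBot ha hθ₀.le).const_mul I)
  have hconst (Y : ℝ) := (hankelIntegral_hankelKernel_eq_hankelIntegral hθ₀ hcos X Y a).trans
    (hankelIntegral_eq hθ₀ (integrable_hankelKernel hcos Y a))
  rw [tendsto_nhds_unique (tendsto_const_nhds.congr hconst) hlim, Complex.sin]
  have hI : -(π * a) * I = a * ((-π : ℝ) * I) := by push_cast; ring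
  have hI' : π * a * I = a * (π * I) := by ring
  rw [hI, hI']
  linear_combination -Complex.Gamma a * (cexp (a * ((-π : ℝ) * I)) - cexp (a * (π * I))) *
    Complex.I_sq

lemma sin_pi_mul_mul_Gamma {z : ℂ} (h₀ : 0 < z.re) (h₁ : z.re < 1) :
    Complex.sin (π * z) * Complex.Gamma z = π * (Complex.Gamma (1 - z))⁻¹ := by
  have hne : Complex.Gamma z * Complex.Gamma (1 - z) ≠ 0 :=
    mul_ne_zero (Complex.Gamma_ne_zero_of_re_pos h₀)
      (Complex.Gamma_ne_zero_of_re_pos (by simpa using h₁))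
  have hrefl := Complex.Gamma_mul_Gamma_one_sub z
  have hsin : Complex.sin (π * z) ≠ 0 := fun h => hne (by rw [hrefl, h, div_zero])
  rw [eq_div_iff hsin] at hrefl
  rw [eq_mul_inv_iff_mul_eq₀ (right_ne_zero_of_mul hne)]
  linear_combination hrefl

/-- **Hankel's formula** for the reciprocal Gamma function. -/
theorem hankelIntegral_hankelKernel {θ : ℝ} (h₁ : π / 2 < θ) (h₂ : θ < π + π / 2) (X : ℝ) (a : ℂ) :
    hankelIntegral θ X (hankelKernel a) = 2 * π * I * (Complex.Gamma (1 - a))⁻¹ := by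
  have hleft := differentiable_hankelIntegral_hankelKernel
    (Real.cos_neg_of_pi_div_two_lt_of_lt h₁ h₂) X
  have hright : Differentiable ℂ fun a : ℂ => 2 * π * I * (Complex.Gamma (1 - a))⁻¹ :=
    (Complex.differentiable_one_div_Gamma.comp (differentiable_id.const_sub 1)).const_mul _
  have hstrip : ∀ᶠ z : ℂ in 𝓝 (1 / 2), 0 < z.re ∧ z.re < 1 :=
    ((isOpen_lt continuous_const Complex.continuous_re).inter
      (isOpen_lt Complex.continuous_re continuous_const)).mem_nhds (by norm_num)
  refine congrFun (AnalyticOnNhd.eq_of_eventuallyEq (fun z _ => hleft.analyticAt z)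
    (fun z _ => hright.analyticAt z) (hstrip.mono fun z hz => ?_)) a
  simp only [hankelIntegral_hankelKernel_of_re_pos h₁ h₂ X hz.1]
  rw [mul_assoc, sin_pi_mul_mul_Gamma hz.1 hz.2]
  ring

lemma hasSum_integral_mul_pow {Ω 𝕜 : Type*} [RCLike 𝕜] [MeasurableSpace Ω] {μ : Measure Ω}
    {g q : Ω → 𝕜} {r : ℝ} (hg : Integrable g μ) (hq : AEStronglyMeasurable q μ) (hr : r < 1)
    (hqr : ∀ᵐ ω ∂μ, ‖q ω‖ ≤ r) :
    HasSum (fun n : ℕ => ∫ ω, g ω * q ω ^ n ∂μ) (∫ ω, g ω * (1 - q ω)⁻¹ ∂μ) := by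
  have hgeom {ω : Ω} (hω : ‖q ω‖ ≤ r) : HasSum (fun n : ℕ => ‖g ω‖ * r ^ n) (‖g ω‖ * (1 - r)⁻¹) :=
    (hasSum_geometric_of_lt_one ((norm_nonneg _).trans hω) hr).mul_left _
  refine hasSum_integral_of_dominated_convergence (fun n ω => ‖g ω‖ * r ^ n)
    (fun n => hg.1.mul (hq.pow n)) (fun n => ?_) ?_ ?_ ?_
  · filter_upwards [hqr] with ω hω
    rw [norm_mul, norm_pow]
    gcongr
  · filter_upwards [hqr] with ω hω using (hgeom hω).summable
  · refine (hg.norm.mul_const (1 - r)⁻¹).congr ?_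
    filter_upwards [hqr] with ω hω using (hgeom hω).tsum_eq.symm
  · filter_upwards [hqr] with ω hω
    exact (hasSum_geometric_of_norm_lt_one (hω.trans_lt hr)).mul_left _

lemma hasSum_hankelIntegral_mul_pow {θ X r : ℝ} (hθ : 0 ≤ θ) {g q : ℂ → ℂ}
    (hg : Integrable g (hankelMeasure θ X)) (hq : Continuous q) (hr : r < 1)
    (hqr : ∀ ζ ∈ hankelStrip θ X, ‖q ζ‖ ≤ r) :
    HasSum (fun n : ℕ => hankelIntegral θ X fun ζ => g ζ * q ζ ^ n)
      (hankelIntegral θ X fun ζ => g ζ * (1 - q ζ)⁻¹) := by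
  simp only [hankelIntegral, ← mul_assoc]
  exact hasSum_integral_mul_pow (integrable_hankelTangent_mul hg) hq.aestronglyMeasurable hr
    ((ae_hankelMeasure_mem_hankelStrip hθ X).mono hqr)

/-- The symbol `e ^ (-αζ) * (x * e ^ (-βζ) + y)`: the Hankel integral of `hankelKernel (1 - ρ)`
times its `n`-th power is, up to the factor `2πi`, the `n`-th term of the series
`mlBi α β ρ x y`. -/
noncomputable def mlBiSymbol (α β x y : ℝ) (ζ : ℂ) : ℂ :=
  cexp (-(α * ζ)) * (x * cexp (-(β * ζ)) + y)

/-- The integrand of the Hankel-type representation of `mlBi α β ρ x y`, which arises by summing the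
geometric series of powers of `mlBiSymbol α β x y`. -/
noncomputable def mlBiIntegrand (α β ρ x y : ℝ) (ζ : ℂ) : ℂ :=
  hankelKernel (1 - ρ) ζ * (1 - mlBiSymbol α β x y ζ)⁻¹

lemma differentiable_mlBiSymbol (α β x y : ℝ) : Differentiable ℂ (mlBiSymbol α β x y) := by
  unfold mlBiSymbol
  fun_prop

lemma norm_cexp_neg_mul_le {b X : ℝ} (hb : 0 ≤ b) {ζ : ℂ} (hζ : X ≤ ζ.re) :
    ‖cexp (-(b * ζ))‖ ≤ rexp (-(b * X)) := by
  simp only [Complex.norm_exp, Complex.neg_re, Complex.re_ofReal_mul]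
  gcongr

lemma norm_mul_cexp_neg_mul_le {β : ℝ} (hβ : 0 ≤ β) (x : ℝ) {ζ : ℂ} (hζ : 0 ≤ ζ.re) :
    ‖x * cexp (-(β * ζ))‖ ≤ |x| := by
  rw [norm_mul, Complex.norm_real, Real.norm_eq_abs]
  exact mul_le_of_le_one_right (abs_nonneg x) (by simpa using norm_cexp_neg_mul_le hβ hζ)

lemma norm_mlBiSymbol_le {α β X : ℝ} (hα : 0 ≤ α) (hβ : 0 ≤ β) (x y : ℝ) (hX : 0 ≤ X) {ζ : ℂ}
    (hζ : X ≤ ζ.re) : ‖mlBiSymbol α β x y ζ‖ ≤ rexp (-(α * X)) * (|x| + |y|) := by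
  have hsum : ‖x * cexp (-(β * ζ)) + y‖ ≤ |x| + |y| :=
    norm_add_le_of_le (norm_mul_cexp_neg_mul_le hβ x (hX.trans hζ)) (by simp)
  rw [mlBiSymbol, norm_mul]
  gcongr
  exact norm_cexp_neg_mul_le hα hζ

lemma hankelKernel_mul_mlBiSymbol_pow (α β ρ x y : ℝ) (n : ℕ) (ζ : ℂ) :
    hankelKernel (1 - ρ) ζ * mlBiSymbol α β x y ζ ^ n =
      ∑ k ∈ Finset.range (n + 1), (n.choose k * x ^ k * y ^ (n - k)) *
        hankelKernel (1 - (ρ + α * n + β * k : ℝ)) ζ := by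
  rw [mlBiSymbol, mul_pow, add_pow, Finset.mul_sum, Finset.mul_sum]
  refine Finset.sum_congr rfl fun k _ => ?_
  have hk : (1 - (ρ + α * n + β * k : ℝ) : ℂ) = (1 - ρ) + (n * (-α) + k * (-β)) := by
    push_cast
    ring
  rw [hk, hankelKernel_add, add_mul, Complex.exp_add, mul_pow, ← Complex.exp_nat_mul,
    ← Complex.exp_nat_mul, mul_assoc (n : ℂ), mul_assoc (k : ℂ), neg_mul, neg_mul]
  ring

theorem mlBi_eq_hankelIntegral {α β : ℝ} (hα : 0 ≤ α) (hβ : 0 ≤ β) (ρ x y : ℝ) {θ X : ℝ}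
    (h₁ : π / 2 < θ) (h₂ : θ < π + π / 2) (hX : 0 ≤ X)
    (hxy : rexp (-(α * X)) * (|x| + |y|) < 1) :
    (mlBi α β ρ x y : ℂ) = (2 * π * I)⁻¹ * hankelIntegral θ X (mlBiIntegrand α β ρ x y) := by
  have hint (a : ℂ) : Integrable (hankelKernel a) (hankelMeasure θ X) :=
    integrable_hankelKernel (Real.cos_neg_of_pi_div_two_lt_of_lt h₁ h₂) X a
  have hsum := (hasSum_hankelIntegral_mul_pow (by linarith [Real.pi_pos]) (hint (1 - ρ))
    (differentiable_mlBiSymbol α β x y).continuous hxy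
    fun ζ hζ => norm_mlBiSymbol_le hα hβ x y hX hζ.1).mul_left (2 * π * I)⁻¹
  unfold mlBiIntegrand
  rw [← hsum.tsum_eq, mlBi, Complex.ofReal_tsum]
  congr 1 with n
  simp only [hankelKernel_mul_mlBiSymbol_pow]
  rw [hankelIntegral_sum _ _ fun k _ => hint _, Finset.mul_sum, Complex.ofReal_sum]
  refine Finset.sum_congr rfl fun k _ => ?_
  rw [hankelIntegral_hankelKernel h₁ h₂, sub_sub_cancel, Complex.Gamma_ofReal]
  push_cast
  field_simp

lemma abs_mlBi_le_norm_hankelIntegral {α β : ℝ} (hα : 0 ≤ α) (hβ : 0 ≤ β) (ρ x y : ℝ) {θ X : ℝ}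
    (h₁ : π / 2 < θ) (h₂ : θ < π + π / 2) (hX : 0 ≤ X)
    (hxy : rexp (-(α * X)) * (|x| + |y|) < 1) :
    |mlBi α β ρ x y| ≤ ‖hankelIntegral θ X (mlBiIntegrand α β ρ x y)‖ := by
  have h2π : 1 ≤ ‖2 * π * I‖ := by
    simp only [norm_mul, Complex.norm_ofNat, Complex.norm_real, Complex.norm_I, mul_one,
      Real.norm_eq_abs, abs_of_pos Real.pi_pos]
    linarith [Real.pi_gt_three]
  rw [← Real.norm_eq_abs, ← Complex.norm_real,
    mlBi_eq_hankelIntegral hα hβ ρ x y h₁ h₂ hX hxy, norm_mul, norm_inv]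
  exact mul_le_of_le_one_left (norm_nonneg _) (inv_le_one_of_one_le₀ h2π)

lemma exists_exp_neg_mul_mul_le {α : ℝ} (hα : 0 < α) (A : ℝ) :
    ∃ X, 0 ≤ X ∧ rexp (-(α * X)) * A ≤ 1 / 2 := by
  have h : Tendsto (fun X : ℝ => rexp (-(α * X)) * A) atTop (𝓝 0) := by
    simpa using (Real.tendsto_exp_neg_atTop_nhds_zero.comp
      (tendsto_id.const_mul_atTop hα)).mul_const A
  exact ((eventually_ge_atTop 0).and (h.eventually_le_const one_half_pos)).exists

lemma exists_abs_mlBi_le {α β : ℝ} (hα : 0 < α) (hβ : 0 ≤ β) (ρ A : ℝ) :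
    ∃ C, 0 ≤ C ∧ ∀ x y : ℝ, |x| + |y| ≤ A → |mlBi α β ρ x y| ≤ C := by
  have hπ : π / 2 < π := by linarith [Real.pi_pos]
  have hπ' : π < π + π / 2 := by linarith [Real.pi_pos]
  obtain ⟨X, hX, hXA⟩ := exists_exp_neg_mul_mul_le hα A
  refine ⟨2 * ∫ ζ, ‖hankelKernel (1 - ρ) ζ‖ ∂hankelMeasure π X, by positivity,
    fun x y hxy => ?_⟩
  have hr : rexp (-(α * X)) * (|x| + |y|) ≤ 1 / 2 :=
    (mul_le_mul_of_nonneg_left hxy (Real.exp_pos _).le).trans hXA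
  refine (abs_mlBi_le_norm_hankelIntegral hα.le hβ ρ x y hπ hπ' hX (by linarith)).trans ?_
  refine norm_hankelIntegral_le Real.pi_pos.le (integrable_hankelKernel (by simp) X _)
    fun ζ hζ => ?_
  have hq : 2⁻¹ ≤ ‖1 - mlBiSymbol α β x y ζ‖ := by
    have h := norm_sub_norm_le 1 (mlBiSymbol α β x y ζ)
    rw [norm_one] at h
    linarith [norm_mlBiSymbol_le hα.le hβ x y hX hζ.1]
  rw [mlBiIntegrand, norm_mul, norm_inv, mul_comm]
  gcongr
  exact inv_le_of_inv_le₀ two_pos hq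

lemma mul_cos_half_le_norm_cexp_add {L γ : ℝ} (hL : 0 ≤ L) (hγ : γ ≤ π) {z : ℂ}
    (hz : |z.im| ≤ γ) : L * Real.cos (γ / 2) ≤ ‖cexp z + L‖ := by
  set φ := z.im / 2
  have hφ : |φ| ≤ γ / 2 := by
    rw [abs_div, abs_two]
    gcongr
  have hcos : Real.cos (γ / 2) ≤ Real.cos φ := by
    rw [← Real.cos_abs φ]
    exact Real.cos_le_cos_of_nonneg_of_le_pi (abs_nonneg φ) (by linarith [Real.pi_pos]) hφ
  have hcos₀ : 0 ≤ Real.cos φ :=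
    Real.cos_nonneg_of_mem_Icc (abs_le.mp (hφ.trans (by gcongr)))
  -- Rotating by half the argument of `cexp z` gives both summands nonnegative real part.
  have hrot : ((cexp z + L) * cexp ((-φ : ℝ) * I)).re = (rexp z.re + L) * Real.cos φ := by
    rw [add_mul, ← Complex.exp_add, Complex.add_re, Complex.exp_re, Complex.re_ofReal_mul,
      Complex.exp_ofReal_mul_I_re]
    simp [show z.im + -φ = φ by ring, add_mul]
  calc L * Real.cos (γ / 2) ≤ L * Real.cos φ := by gcongr
    _ ≤ (rexp z.re + L) * Real.cos φ :=
        mul_le_mul_of_nonneg_right (le_add_of_nonneg_left (Real.exp_pos _).le) hcos₀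
    _ ≤ ‖(cexp z + L) * cexp ((-φ : ℝ) * I)‖ := hrot ▸ Complex.re_le_norm _
    _ = ‖cexp z + L‖ := by rw [norm_mul, Complex.norm_exp_ofReal_mul_I, mul_one]

lemma cexp_mul_one_sub_mlBiSymbol (α β x y : ℝ) (ζ : ℂ) :
    cexp (α * ζ) * (1 - mlBiSymbol α β x y ζ) = cexp (α * ζ) - y - x * cexp (-(β * ζ)) := by
  have h : cexp (α * ζ) * cexp (-(α * ζ)) = 1 := by
    rw [← Complex.exp_add, add_neg_cancel, Complex.exp_zero]
  rw [mlBiSymbol]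
  linear_combination -(x * cexp (-(β * ζ)) + y) * h

section SectorBounds

variable {α β x L θ : ℝ} {ζ : ℂ}

lemma le_norm_cexp_mul_one_sub_mlBiSymbol (hα : 0 ≤ α) (hβ : 0 ≤ β) (hL : 0 ≤ L)
    (hθ : α * θ ≤ π) (hx : 2 * |x| ≤ Real.cos (α * θ / 2) * L) (hζ : ζ ∈ hankelStrip θ 0) :
    Real.cos (α * θ / 2) * L / 2 ≤ ‖cexp (α * ζ) * (1 - mlBiSymbol α β x (-L) ζ)‖ := by
  have him : |(α * ζ : ℂ).im| ≤ α * θ := by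
    rw [Complex.im_ofReal_mul, abs_mul, abs_of_nonneg hα]
    gcongr
    exact abs_le.mpr hζ.2
  rw [cexp_mul_one_sub_mlBiSymbol, Complex.ofReal_neg, sub_neg_eq_add]
  linarith [mul_cos_half_le_norm_cexp_add hL hθ him, norm_mul_cexp_neg_mul_le hβ x hζ.1,
    norm_sub_norm_le (cexp (α * ζ) + L) (x * cexp (-(β * ζ)))]

lemma one_sub_mlBiSymbol_ne_zero (hα : 0 ≤ α) (hβ : 0 ≤ β) (hL : 0 < L) (hθ : α * θ ≤ π)
    (hκ : 0 < Real.cos (α * θ / 2)) (hx : 2 * |x| ≤ Real.cos (α * θ / 2) * L)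
    (hζ : ζ ∈ hankelStrip θ 0) : 1 - mlBiSymbol α β x (-L) ζ ≠ 0 := by
  have hpos : 0 < Real.cos (α * θ / 2) * L / 2 := by positivity
  exact right_ne_zero_of_mul <| norm_pos_iff.mp <|
    hpos.trans_le (le_norm_cexp_mul_one_sub_mlBiSymbol hα hβ hL.le hθ hx hζ)

lemma norm_mlBiIntegrand_le (hα : 0 ≤ α) (hβ : 0 ≤ β) (ρ : ℝ) (hL : 0 < L) (hθ : α * θ ≤ π)
    (hκ : 0 < Real.cos (α * θ / 2)) (hx : 2 * |x| ≤ Real.cos (α * θ / 2) * L)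
    (hζ : ζ ∈ hankelStrip θ 0) :
    ‖mlBiIntegrand α β ρ x (-L) ζ‖ ≤
      2 / (Real.cos (α * θ / 2) * L) * ‖hankelKernel (1 - ρ + α) ζ‖ := by
  have hne := one_sub_mlBiSymbol_ne_zero hα hβ hL hθ hκ hx hζ
  have hexp := Complex.exp_ne_zero (α * ζ)
  have heq : mlBiIntegrand α β ρ x (-L) ζ =
      (cexp (α * ζ) * (1 - mlBiSymbol α β x (-L) ζ))⁻¹ * hankelKernel (1 - ρ + α) ζ := by
    rw [mlBiIntegrand, hankelKernel_add]
    field_simp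
  rw [heq, norm_mul, norm_inv, ← inv_div]
  gcongr
  exact le_norm_cexp_mul_one_sub_mlBiSymbol hα hβ hL.le hθ hx hζ

lemma abs_mlBi_neg_le_of_le_cos_mul (hα : 0 < α) (hβ : 0 ≤ β) (ρ : ℝ) (hL : 0 < L)
    (h₁ : π / 2 < θ) (h₂ : θ < π + π / 2) (hθ : α * θ ≤ π) (hκ : 0 < Real.cos (α * θ / 2))
    (hx : 2 * |x| ≤ Real.cos (α * θ / 2) * L) :
    |mlBi α β ρ x (-L)| ≤ 2 / (Real.cos (α * θ / 2) * L) *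
      ∫ ζ, ‖hankelKernel (1 - ρ + α) ζ‖ ∂hankelMeasure θ 0 := by
  have hθ₀ : 0 < θ := by linarith [Real.pi_pos]
  have hkernel (Y : ℝ) := integrable_hankelKernel
    (Real.cos_neg_of_pi_div_two_lt_of_lt h₁ h₂) Y (1 - ρ + α)
  have hbound {ζ : ℂ} (hζ : ζ ∈ hankelStrip θ 0) :=
    norm_mlBiIntegrand_le hα.le hβ ρ hL hθ hκ hx hζ
  have hdiff : DifferentiableOn ℂ (mlBiIntegrand α β ρ x (-L)) (hankelStrip θ 0) :=
    (differentiable_hankelKernel _).differentiableOn.mul <|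
      ((differentiable_mlBiSymbol α β x (-L)).const_sub 1).differentiableOn.inv fun ζ hζ =>
        one_sub_mlBiSymbol_ne_zero hα.le hβ hL hθ hκ hx hζ
  have hint {Y : ℝ} (hY : 0 ≤ Y) :
      Integrable (mlBiIntegrand α β ρ x (-L)) (hankelMeasure θ Y) := by
    have hsub : hankelStrip θ Y ⊆ hankelStrip θ 0 := fun ζ hζ => ⟨hY.trans hζ.1, hζ.2⟩
    exact integrable_hankelMeasure_of_norm_le hθ₀.le (hkernel Y) (hdiff.continuousOn.mono hsub)
      fun ζ hζ => hbound (hsub hζ)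
  obtain ⟨X, hX, hXA⟩ := exists_exp_neg_mul_mul_le hα (|x| + |-L|)
  calc |mlBi α β ρ x (-L)|
      ≤ ‖hankelIntegral θ X (mlBiIntegrand α β ρ x (-L))‖ :=
        abs_mlBi_le_norm_hankelIntegral hα.le hβ ρ x (-L) h₁ h₂ hX (by linarith)
    _ = ‖hankelIntegral θ 0 (mlBiIntegrand α β ρ x (-L))‖ := by
        rw [hankelIntegral_eq_of_le hθ₀ hX hdiff (hint le_rfl) (hint hX)]
    _ ≤ _ := norm_hankelIntegral_le hθ₀.le (hkernel 0) fun ζ hζ => hbound hζ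

end SectorBounds

theorem mlBi_lambda_estimate_general {α β : ℝ} (hα : 0 < α) (hα₂ : α < 2) (hβ : 0 ≤ β)
    (ρ M : ℝ) :
    ∃ c > 0, ∀ x L : ℝ, |x| ≤ M → 0 < L → |mlBi α β ρ x (-L)| ≤ c / L := by
  have hπ := Real.pi_pos
  obtain ⟨θ, h₁, hθ⟩ := exists_between (show π / 2 < min (π + π / 2) (π / α) from
    lt_min (by linarith) (div_lt_div_of_pos_left hπ hα hα₂))
  obtain ⟨h₂, hαθ⟩ := lt_min_iff.mp hθ
  rw [lt_div_iff₀' hα] at hαθ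
  have hαθ₀ : 0 < α * θ := mul_pos hα (by linarith)
  set κ := Real.cos (α * θ / 2)
  have hκ : 0 < κ := Real.cos_pos_of_mem_Ioo ⟨by linarith, by linarith⟩
  set L₀ := 2 * |M| / κ
  obtain ⟨C, hC, hsmall⟩ := exists_abs_mlBi_le hα hβ ρ (|M| + L₀)
  set N := ∫ ζ, ‖hankelKernel (1 - ρ + α) ζ‖ ∂hankelMeasure θ 0
  have : 0 ≤ N := by positivity
  refine ⟨C * L₀ + 2 / κ * N + 1, by positivity, fun x L hx hL => ?_⟩
  have hxM : |x| ≤ |M| := hx.trans (le_abs_self M)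
  rcases le_total L L₀ with hLL₀ | hLL₀
  · have hmlBi := hsmall x (-L) (by rw [abs_neg, abs_of_pos hL]; linarith)
    rw [le_div_iff₀ hL]
    calc |mlBi α β ρ x (-L)| * L ≤ C * L₀ := by gcongr
      _ ≤ C * L₀ + 2 / κ * N + 1 := by linarith [show 0 ≤ 2 / κ * N by positivity]
  · have hLκ : 2 * |x| ≤ κ * L := by
      rw [div_le_iff₀' hκ] at hLL₀
      linarith
    calc |mlBi α β ρ x (-L)| ≤ 2 / (κ * L) * N :=
          abs_mlBi_neg_le_of_le_cos_mul hα hβ ρ hL h₁ h₂ hαθ.le hκ hLκ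
      _ = 2 / κ * N / L := by field_simp
      _ ≤ (C * L₀ + 2 / κ * N + 1) / L := by
          gcongr
          linarith [show 0 ≤ C * L₀ by positivity]

end

/-- For `1 < α₁ < 2`, `0 < α₂ < α₁`, `ρ > 0`, `μ > 0`, `T > 0`, there is `c > 0`
(depending only on `α₁, α₂, ρ, μ, T`) such that for every `t ∈ (0,T]` and every `λ > 0`,
`|E_{(α₁−α₂,α₁),ρ}(−μ t^{α₁−α₂}, −λ t^{α₁})| ≤ c/(λ t^{α₁})`. -/
theorem mlBi_lambda_estimate (α₁ α₂ ρ μ T : ℝ) (hα₁ : 1 < α₁) (hα₁' : α₁ < 2)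
    (hα₂ : 0 < α₂) (hα₂' : α₂ < α₁) (hρ : 0 < ρ) (hμ : 0 < μ) (hT : 0 < T) :
    ∃ c > 0, ∀ t : ℝ, 0 < t → t ≤ T → ∀ lam : ℝ, 0 < lam →
      |mlBi (α₁ - α₂) α₁ ρ (-(μ * t ^ (α₁ - α₂))) (-(lam * t ^ α₁))| ≤ c / (lam * t ^ α₁) := by
  obtain ⟨c, hc, h⟩ := mlBi_lambda_estimate_general (α := α₁ - α₂) (β := α₁) (by linarith)
    (by linarith) (by linarith) ρ (μ * T ^ (α₁ - α₂))
  refine ⟨c, hc, fun t ht htT lam hlam => h _ _ ?_ (by positivity)⟩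
  have : 0 ≤ α₁ - α₂ := by linarith
  rw [abs_neg, abs_of_nonneg (by positivity)]
  gcongr
end
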